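/- Fix real κ > 0, η > 0, a ∈ (0, 1/2), c > 1 and δ ∈ (0, 1). There exists f₀ > 0 such that for all f ∈ (0, f₀): D_f(0) ≠ 0, and for every R > f^a there exists r with (1 − δ)R < r < R such that |D_f(z)/D_f(0)| ≥ (e^{−7}·δ)^{c·4·(2eR)^{3/2}/(3f)} for every z ∈ ℂ with |z| = r. -/

import Mathlib

open Real

/-- Taylor coefficients of the Airy function `Ai`:
`a₀ = 3^{−2/3}/Γ(2/3)`, `a₁ = −3^{−1/3}/Γ(1/3)`, `a₂ = 0`,
`a_{k+3} = a_k/((k+3)(k+2))`. -/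
noncomputable def airyCoeff : ℕ → ℂ
  | 0 => (3 : ℂ) ^ (-(2 : ℂ) / 3) / Complex.Gamma (2 / 3)
  | 1 => -((3 : ℂ) ^ (-(1 : ℂ) / 3) / Complex.Gamma (1 / 3))
  | 2 => 0
  | (k + 3) => airyCoeff k / (((k : ℂ) + 3) * ((k : ℂ) + 2))

/-- The Airy function `Ai`, as the entire function with the above Taylor
coefficients at `0`. -/
noncomputable def Ai (z : ℂ) : ℂ := ∑' k : ℕ, airyCoeff k * z ^ k

/-- `ω = e^{2πi/3}` -/
noncomputable def ωc : ℂ := Complex.exp (2 * π * Complex.I / 3)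

/-- `W = f^{1/3}·e^{−iπ/6}/(2π)` -/
noncomputable def Wf (f : ℝ) : ℂ :=
  ((f ^ ((1 : ℝ) / 3) : ℝ) : ℂ) * Complex.exp (-(π : ℂ) * Complex.I / 6) / (2 * π)

/-- `α₊(z) = Ai(−ω(z − κf)f^{−2/3})·Ai(−(z − κf)f^{−2/3})` -/
noncomputable def alphaP (κ f : ℝ) (z : ℂ) : ℂ :=
  Ai (-ωc * (z - κ * f) * ((f ^ (-(2 : ℝ) / 3) : ℝ) : ℂ)) *
    Ai (-(z - κ * f) * ((f ^ (-(2 : ℝ) / 3) : ℝ) : ℂ))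

/-- `α₋(z) = Ai(−ω(z + κf)f^{−2/3})·Ai(−(z + κf)f^{−2/3})` -/
noncomputable def alphaM (κ f : ℝ) (z : ℂ) : ℂ :=
  Ai (-ωc * (z + κ * f) * ((f ^ (-(2 : ℝ) / 3) : ℝ) : ℂ)) *
    Ai (-(z + κ * f) * ((f ^ (-(2 : ℝ) / 3) : ℝ) : ℂ))

/-- `β₊(z) = Ai(−ω(z + κf)f^{−2/3})·Ai(−(z − κf)f^{−2/3})` -/
noncomputable def betaP (κ f : ℝ) (z : ℂ) : ℂ :=
  Ai (-ωc * (z + κ * f) * ((f ^ (-(2 : ℝ) / 3) : ℝ) : ℂ)) *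
    Ai (-(z - κ * f) * ((f ^ (-(2 : ℝ) / 3) : ℝ) : ℂ))

/-- `β₋(z) = Ai(−ω(z − κf)f^{−2/3})·Ai(−(z + κf)f^{−2/3})` -/
noncomputable def betaM (κ f : ℝ) (z : ℂ) : ℂ :=
  Ai (-ωc * (z - κ * f) * ((f ^ (-(2 : ℝ) / 3) : ℝ) : ℂ)) *
    Ai (-(z + κ * f) * ((f ^ (-(2 : ℝ) / 3) : ℝ) : ℂ))

/-- The resonance determinant `D_f` of the Stark Hamiltonian
`p² + fx + η⁻¹(δ_κ + δ_{−κ})`: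
`D_f(z) = 1 + (α₊ + α₋)/(ηW) + β₊(β₋ − β₊)/(η²W²)`. -/
noncomputable def Df (κ η f : ℝ) (z : ℂ) : ℂ :=
  1 + (alphaP κ f z + alphaM κ f z) / (η * Wf f)
    + betaP κ f z * (betaM κ f z - betaP κ f z) / (η ^ 2 * (Wf f) ^ 2)

/-- Absolute convergence at every radius. -/
def EntireCoeff (c : ℕ → ℂ) : Prop := ∀ r : ℝ, 0 ≤ r → Summable fun k => ‖c k‖ * r ^ k

theorem EntireCoeff.deriv {c : ℕ → ℂ} (hc : EntireCoeff c) :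
    EntireCoeff fun k => (k + 1) * c (k + 1) := by
  intro r hr
  have h := (summable_nat_add_iff 1).mpr (hc (2 * r + 2) (by positivity))
  refine Summable.of_nonneg_of_le (fun k => by positivity) (fun k => ?_) h
  have h1 : ‖((k : ℂ) + 1)‖ ≤ 2 ^ (k + 1) := by
    rw [← Nat.cast_succ, Complex.norm_natCast]
    exact_mod_cast Nat.lt_two_pow_self.le
  calc ‖((k : ℂ) + 1) * c (k + 1)‖ * r ^ k = ‖c (k + 1)‖ * (‖((k : ℂ) + 1)‖ * r ^ k) := by
        rw [norm_mul]; ring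
    _ ≤ ‖c (k + 1)‖ * (2 ^ (k + 1) * (r + 1) ^ (k + 1)) := by
        gcongr ?_ * (?_ * ?_)
        calc r ^ k ≤ (r + 1) ^ k := by gcongr; linarith
          _ ≤ (r + 1) ^ (k + 1) := pow_le_pow_right₀ (by linarith) (by omega)
    _ = ‖c (k + 1)‖ * (2 * r + 2) ^ (k + 1) := by rw [← mul_pow]; ring

theorem EntireCoeff.summable {c : ℕ → ℂ} (hc : EntireCoeff c) (z : ℂ) :
    Summable fun k => c k * z ^ k :=
  Summable.of_norm (by simpa [norm_mul, norm_pow] using hc ‖z‖ (norm_nonneg z))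

theorem EntireCoeff.hasDerivAt {c : ℕ → ℂ} (hc : EntireCoeff c) (z : ℂ) :
    HasDerivAt (fun z => ∑' k, c k * z ^ k) (∑' k : ℕ, ((k + 1) * c (k + 1)) * z ^ k) z := by
  have hu : Summable fun k : ℕ => ‖c k * k‖ * (‖z‖ + 1) ^ (k - 1) := by
    rw [← summable_nat_add_iff 1]
    convert! hc.deriv (‖z‖ + 1) (by positivity) using 2 with k
    push_cast
    rw [mul_comm (c (k + 1))]
  have h := hasDerivAt_tsum_of_isPreconnected (g := fun k z => c k * z ^ k)
    (g' := fun (k : ℕ) z => c k * (k * z ^ (k - 1))) hu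
    (Metric.isOpen_ball (x := (0 : ℂ)) (ε := ‖z‖ + 1)) (convex_ball _ _).isPreconnected
    (fun k y _ => (hasDerivAt_pow k y).const_mul (c k))
    (fun k y hy => by
      rw [← mul_assoc, norm_mul, norm_pow]
      gcongr
      simpa using (Metric.mem_ball.mp hy).le)
    (y₀ := 0) (by simp; positivity) (hc.summable 0) (y := z) (by simp)
  convert! h using 1
  have hs : Summable fun (k : ℕ) => c k * (k * z ^ (k - 1)) := by
    refine Summable.of_norm_bounded hu fun k => ?_
    rw [← mul_assoc, norm_mul, norm_pow]
    gcongr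
    linarith
  rw [hs.tsum_eq_zero_add]
  simp only [Nat.cast_zero, zero_mul, mul_zero, zero_add, Nat.add_sub_cancel]
  refine tsum_congr fun k => ?_
  push_cast
  ring

theorem norm_airyCoeff_three_mul (k : ℕ) :
    ‖airyCoeff (3 * k)‖ ≤ ‖airyCoeff 0‖ * ((2 / 3) ^ (2 * k) / (2 * k).factorial) ∧
    ‖airyCoeff (3 * k + 1)‖ ≤ ‖airyCoeff 1‖ * ((2 / 3) ^ (2 * k) / (2 * k).factorial) ∧
    airyCoeff (3 * k + 2) = 0 := by
  induction k with
  | zero => simp [airyCoeff]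
  | succ k ih =>
    obtain ⟨h0, h1, h2⟩ := ih
    have hstep : ∀ j : ℕ, 3 * k ≤ j → ∀ A : ℝ, 0 ≤ A →
        ‖airyCoeff j‖ ≤ A * ((2 / 3) ^ (2 * k) / (2 * k).factorial) →
        ‖airyCoeff (j + 3)‖ ≤ A * ((2 / 3) ^ (2 * (k + 1)) / (2 * (k + 1)).factorial) := by
      intro j hj A hA h
      have hj' : 3 * (k : ℝ) ≤ j := by exact_mod_cast hj
      have e1 : ‖((j : ℂ) + 3) * ((j : ℂ) + 2)‖ = ((j : ℝ) + 3) * (j + 2) := by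
        rw [norm_mul]
        congr 1
        · exact_mod_cast Complex.norm_natCast (j + 3)
        · exact_mod_cast Complex.norm_natCast (j + 2)
      have e2 : ((2 * (k + 1)).factorial : ℝ) = (2 * k + 2) * ((2 * k + 1) * (2 * k).factorial) := by
        rw [show 2 * (k + 1) = 2 * k + 1 + 1 by ring, Nat.factorial_succ, Nat.factorial_succ]
        push_cast
        ring
      rw [airyCoeff, norm_div, e1, e2, div_le_iff₀ (by positivity)]
      refine h.trans ?_
      rw [mul_assoc]
      gcongr
      rw [show 2 * (k + 1) = 2 * k + 2 by ring, pow_add, div_mul_eq_mul_div,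
        div_le_div_iff₀ (by positivity) (by positivity)]
      have hkey : ((2 * k + 2) * (2 * k + 1) : ℝ) ≤ (2 / 3) ^ 2 * ((j + 3) * (j + 2)) := by
        have hk : (0 : ℝ) ≤ k := by positivity
        nlinarith
      calc ((2 / 3 : ℝ)) ^ (2 * k) * ((2 * k + 2) * ((2 * k + 1) * (2 * k).factorial))
          = (2 / 3) ^ (2 * k) * (2 * k).factorial * ((2 * k + 2) * (2 * k + 1)) := by ring
        _ ≤ (2 / 3) ^ (2 * k) * (2 * k).factorial * ((2 / 3) ^ 2 * ((j + 3) * (j + 2))) := by gcongr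
        _ = _ := by ring
    refine ⟨hstep (3 * k) le_rfl _ (norm_nonneg _) h0,
      hstep (3 * k + 1) (by omega) _ (norm_nonneg _) h1, ?_⟩
    rw [show 3 * (k + 1) + 2 = (3 * k + 2) + 3 by ring, airyCoeff, h2, zero_div]

theorem sum_norm_airyCoeff_le {r : ℝ} (hr : 0 ≤ r) (n : ℕ) :
    ∑ k ∈ Finset.range n, ‖airyCoeff k‖ * r ^ k ≤
      (‖airyCoeff 0‖ + ‖airyCoeff 1‖ * r) * exp (2 / 3 * r ^ (3 / 2 : ℝ)) := by
  set x : ℝ := 2 / 3 * r ^ (3 / 2 : ℝ) with hx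
  have hx0 : 0 ≤ x := by positivity
  have hx2 : ∀ k : ℕ, x ^ (2 * k) = (2 / 3) ^ (2 * k) * r ^ (3 * k) := by
    intro k
    rw [hx, mul_pow, ← Real.rpow_mul_natCast hr, ← Real.rpow_natCast r]
    congr 2
    push_cast
    ring
  have h3 : ∀ m : ℕ, ∑ k ∈ Finset.range (3 * m), ‖airyCoeff k‖ * r ^ k ≤
      (‖airyCoeff 0‖ + ‖airyCoeff 1‖ * r) *
        ∑ k ∈ Finset.range m, x ^ (2 * k) / (2 * k).factorial := by
    intro m
    induction m with
    | zero => simp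
    | succ m ih =>
      obtain ⟨h0, h1, h2⟩ := norm_airyCoeff_three_mul m
      rw [show 3 * (m + 1) = 3 * m + 1 + 1 + 1 by ring, Finset.sum_range_succ,
        Finset.sum_range_succ, Finset.sum_range_succ, Finset.sum_range_succ _ m, mul_add, h2, hx2]
      have i0 : ‖airyCoeff (3 * m)‖ * r ^ (3 * m) ≤
          ‖airyCoeff 0‖ * ((2 / 3) ^ (2 * m) / (2 * m).factorial) * r ^ (3 * m) := by gcongr
      have i1 : ‖airyCoeff (3 * m + 1)‖ * r ^ (3 * m + 1) ≤
          ‖airyCoeff 1‖ * ((2 / 3) ^ (2 * m) / (2 * m).factorial) * r ^ (3 * m + 1) := by gcongr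
      have e : (‖airyCoeff 0‖ + ‖airyCoeff 1‖ * r) *
          ((2 / 3) ^ (2 * m) * r ^ (3 * m) / (2 * m).factorial) =
          ‖airyCoeff 0‖ * ((2 / 3) ^ (2 * m) / (2 * m).factorial) * r ^ (3 * m) +
          ‖airyCoeff 1‖ * ((2 / 3) ^ (2 * m) / (2 * m).factorial) * r ^ (3 * m + 1) := by ring
      rw [e, norm_zero, zero_mul, add_zero]
      linarith
  have hcosh : ∑ k ∈ Finset.range n, x ^ (2 * k) / (2 * k).factorial ≤ exp x := by
    refine (sum_le_hasSum _ (fun k _ => by positivity) (Real.hasSum_cosh x)).trans ?_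
    rw [Real.cosh_eq]
    have : exp (-x) ≤ exp x := Real.exp_le_exp.mpr (by linarith)
    linarith
  calc _ ≤ ∑ k ∈ Finset.range (3 * n), ‖airyCoeff k‖ * r ^ k :=
        Finset.sum_le_sum_of_subset_of_nonneg (Finset.range_mono (by omega))
          fun k _ _ => by positivity
    _ ≤ _ := h3 n
    _ ≤ _ := by gcongr

theorem entireCoeff_airyCoeff : EntireCoeff airyCoeff := fun _ hr =>
  summable_of_sum_range_le (fun _ => by positivity) (sum_norm_airyCoeff_le hr)

theorem norm_Ai_le {z : ℂ} {m : ℝ} (hz : ‖z‖ ≤ m) :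
    ‖Ai z‖ ≤ (‖airyCoeff 0‖ + ‖airyCoeff 1‖ * m) * exp (2 / 3 * m ^ (3 / 2 : ℝ)) := by
  have hm : 0 ≤ m := (norm_nonneg z).trans hz
  have hs : Summable fun k => ‖airyCoeff k * z ^ k‖ := by
    simpa [norm_mul, norm_pow] using entireCoeff_airyCoeff ‖z‖ (norm_nonneg z)
  calc ‖Ai z‖ ≤ ∑' k, ‖airyCoeff k * z ^ k‖ := norm_tsum_le_tsum_norm hs
    _ ≤ (‖airyCoeff 0‖ + ‖airyCoeff 1‖ * ‖z‖) * exp (2 / 3 * ‖z‖ ^ (3 / 2 : ℝ)) := by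
        refine Real.tsum_le_of_sum_range_le (fun _ => norm_nonneg _) fun n => ?_
        simpa [norm_mul, norm_pow] using sum_norm_airyCoeff_le (norm_nonneg z) n
    _ ≤ _ := by gcongr

/-- The derivative of `Ai`. -/
noncomputable def AiDeriv (z : ℂ) : ℂ := ∑' k : ℕ, ((k + 1) * airyCoeff (k + 1)) * z ^ k

theorem hasDerivAt_Ai (z : ℂ) : HasDerivAt Ai (AiDeriv z) z := entireCoeff_airyCoeff.hasDerivAt z

theorem hasDerivAt_AiDeriv (z : ℂ) : HasDerivAt AiDeriv (z * Ai z) z := by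
  convert! entireCoeff_airyCoeff.deriv.hasDerivAt z using 1
  rw [(entireCoeff_airyCoeff.deriv.deriv.summable z).tsum_eq_zero_add, Ai, ← tsum_mul_left]
  have : airyCoeff 2 = 0 := rfl
  simp only [zero_add, Nat.reduceAdd, this, mul_zero, zero_mul]
  refine tsum_congr fun k => ?_
  rw [airyCoeff]
  have h3 : ((k : ℂ) + 3) ≠ 0 := by exact_mod_cast (Nat.succ_ne_zero (k + 2))
  have h2 : ((k : ℂ) + 2) ≠ 0 := by exact_mod_cast (Nat.succ_ne_zero (k + 1))
  push_cast
  field_simp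
  ring

@[fun_prop]
theorem differentiable_Ai : Differentiable ℂ Ai := fun z => (hasDerivAt_Ai z).differentiableAt

theorem Ai_zero : Ai 0 = airyCoeff 0 := by
  rw [Ai, (entireCoeff_airyCoeff.summable 0).tsum_eq_zero_add]; simp

theorem AiDeriv_zero : AiDeriv 0 = airyCoeff 1 := by
  rw [AiDeriv, (entireCoeff_airyCoeff.deriv.summable 0).tsum_eq_zero_add]; simp

theorem ωc_pow_three : ωc ^ 3 = 1 := by
  rw [ωc, ← Complex.exp_nat_mul, ← Complex.exp_two_pi_mul_I]
  congr 1
  push_cast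
  ring

theorem norm_ωc : ‖ωc‖ = 1 := by
  rw [ωc, show 2 * (π : ℂ) * Complex.I / 3 = ((2 * π / 3 : ℝ) : ℂ) * Complex.I by push_cast; ring]
  exact Complex.norm_exp_ofReal_mul_I _

theorem hasDerivAt_Ai_ωc (z : ℂ) : HasDerivAt (fun u => Ai (ωc * u)) (ωc * AiDeriv (ωc * z)) z := by
  have := (hasDerivAt_Ai (ωc * z)).comp z ((hasDerivAt_id z).const_mul ωc)
  convert! this using 1
  ring

theorem hasDerivAt_AiDeriv_ωc (z : ℂ) :
    HasDerivAt (fun u => ωc * AiDeriv (ωc * u)) (z * Ai (ωc * z)) z := by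
  have := ((hasDerivAt_AiDeriv (ωc * z)).comp z ((hasDerivAt_id z).const_mul ωc)).const_mul ωc
  convert! this using 1
  linear_combination (-(z * Ai (ωc * z))) * ωc_pow_three

/-- The Wronskian of `Ai z` and `Ai (ω z)` is constant. -/
theorem airy_wronskian (z : ℂ) :
    ωc * AiDeriv (ωc * z) * Ai z - Ai (ωc * z) * AiDeriv z =
      (ωc - 1) * (airyCoeff 0 * airyCoeff 1) := by
  have hd : ∀ w, HasDerivAt
      (fun z => ωc * AiDeriv (ωc * z) * Ai z - Ai (ωc * z) * AiDeriv z) 0 w := by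
    intro w
    convert! ((hasDerivAt_AiDeriv_ωc w).mul (hasDerivAt_Ai w)).sub
      ((hasDerivAt_Ai_ωc w).mul (hasDerivAt_AiDeriv w)) using 1
    ring
  have h := is_const_of_deriv_eq_zero (fun w => (hd w).differentiableAt)
    (fun w => (hd w).deriv) z 0
  simp only [mul_zero, Ai_zero, AiDeriv_zero] at h
  rw [h]
  ring

theorem norm_airy_cross_le (q : ℂ) {T m : ℝ} (hT : 0 ≤ T) (hm : ‖q‖ + T ≤ m) :
    ‖Ai (ωc * (q + T)) * Ai q - Ai (ωc * q) * Ai (q + T)‖ ≤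
      ‖(ωc - 1) * (airyCoeff 0 * airyCoeff 1)‖ * exp ((1 + m) * T) := by
  have hm0 : 0 ≤ m := le_trans (by positivity) hm
  let Y : ℝ → ℂ × ℂ := fun t =>
    (Ai (ωc * (q + t)) * Ai q - Ai (ωc * q) * Ai (q + t),
      ωc * AiDeriv (ωc * (q + t)) * Ai q - Ai (ωc * q) * AiDeriv (q + t))
  let Y' : ℝ → ℂ × ℂ := fun t => ((Y t).2, (q + t) * (Y t).1)
  have hY : ∀ t, HasDerivAt Y (Y' t) t := by
    intro t
    have hl : HasDerivAt (fun s : ℝ => q + (s : ℂ)) 1 t :=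
      (Complex.ofRealCLM.hasDerivAt (x := t)).const_add q
    have d1 := (hasDerivAt_Ai_ωc (q + t)).comp t hl
    have d2 := (hasDerivAt_Ai (q + t)).comp t hl
    have d3 := (hasDerivAt_AiDeriv_ωc (q + t)).comp t hl
    have d4 := (hasDerivAt_AiDeriv (q + t)).comp t hl
    have e1 := (d1.mul_const (Ai q)).sub (d2.const_mul (Ai (ωc * q)))
    have e2 := (d3.mul_const (Ai q)).sub (d4.const_mul (Ai (ωc * q)))
    convert! e1.prodMk e2 using 1
    simp only [Y', Y, Prod.mk.injEq]
    constructor <;> ring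
  have hcont : Continuous Y := continuous_iff_continuousAt.mpr fun t => (hY t).continuousAt
  have hY0 : ‖Y 0‖ ≤ ‖(ωc - 1) * (airyCoeff 0 * airyCoeff 1)‖ := by
    rw [← airy_wronskian q]
    simp [Y, Prod.norm_def]
  have hb := norm_le_gronwallBound_of_norm_deriv_right_le (K := 1 + m) (ε := 0) (a := 0) (b := T)
    hcont.continuousOn (fun t _ => (hY t).hasDerivWithinAt) hY0
    (fun t ht => by
      have h1 := norm_fst_le (Y t)
      have h2 := norm_snd_le (Y t)
      have hq : ‖q + (t : ℂ)‖ ≤ m := by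
        refine (norm_add_le _ _).trans ?_
        rw [Complex.norm_real, Real.norm_of_nonneg ht.1]
        linarith [ht.2]
      rw [Prod.norm_def, add_zero]
      refine max_le ?_ ?_
      · exact h2.trans (by nlinarith [norm_nonneg (Y t)])
      · simp only [Y', norm_mul]
        calc _ ≤ m * ‖Y t‖ := by gcongr
          _ ≤ _ := by nlinarith [norm_nonneg (Y t)])
    T ⟨hT, le_rfl⟩
  rw [gronwallBound_ε0, sub_zero] at hb
  exact (norm_fst_le (Y T)).trans hb

/-- A product of `n` real linear factors is at least `(h / 2) ^ n` in absolute value somewhere on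
any interval of half-length `h`. -/
theorem exists_pow_le_prod_abs_sub {n : ℕ} (b : Fin n → ℝ) (m : ℝ) {h : ℝ} (hh : 0 < h) :
    ∃ x ∈ Set.Icc (m - h) (m + h), (h / 2) ^ n ≤ ∏ i, |x - b i| := by
  rcases Nat.eq_zero_or_pos n with rfl | hn
  · exact ⟨m, ⟨by linarith, by linarith⟩, by simp⟩
  set Q : Polynomial ℝ := ∏ i, (Polynomial.X - Polynomial.C ((b i - m) / h)) with hQ
  have hQm : Q.Monic := Polynomial.monic_prod_of_monic _ _ fun i _ => Polynomial.monic_X_sub_C _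
  have hQd : Q.natDegree = n := by
    rw [hQ, Polynomial.natDegree_finsetProd_X_sub_C_eq_card]; simp
  have key : ∃ t ∈ Set.Icc (-1 : ℝ) 1, (1 / 2 : ℝ) ^ n ≤ |Q.eval t| := by
    by_contra! hcon
    have h1 := Polynomial.Chebyshev.coeff_le_of_forall_abs_le_one (n := n)
      (P := Polynomial.C ((2 : ℝ) ^ n) * Q)
      (by
        rw [Polynomial.degree_C_mul (by positivity),
          Polynomial.degree_eq_natDegree hQm.ne_zero, hQd])
      (by
        intro x hx
        rw [Polynomial.eval_mul, Polynomial.eval_C, abs_mul, abs_of_pos (by positivity)]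
        calc (2 : ℝ) ^ n * |Q.eval x| ≤ 2 ^ n * (1 / 2) ^ n := by
              gcongr; exact (hcon x hx).le
          _ = 1 := by rw [← mul_pow]; norm_num)
    have hco : Q.coeff n = 1 := by
      have := hQm.coeff_natDegree
      rwa [hQd] at this
    rw [Polynomial.coeff_C_mul, hco, mul_one] at h1
    exact absurd h1 (not_le.mpr (pow_lt_pow_right₀ (by norm_num) (by omega)))
  obtain ⟨t, ht, hle⟩ := key
  refine ⟨m + h * t, ⟨by nlinarith [ht.1], by nlinarith [ht.2]⟩, ?_⟩
  have e1 : ∏ i, |m + h * t - b i| = h ^ n * |Q.eval t| := by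
    have e2 : ∀ i, |m + h * t - b i| = h * |t - (b i - m) / h| := fun i => by
      rw [← abs_of_pos hh, ← abs_mul, abs_of_pos hh]
      congr 1
      field_simp
      ring
    simp [hQ, Polynomial.eval_prod, Finset.abs_prod, e2, Finset.prod_mul_distrib]
  rw [e1]
  calc (h / 2) ^ n = h ^ n * (1 / 2) ^ n := by rw [← mul_pow]; ring
    _ ≤ _ := by gcongr

theorem exists_eq_exp_on_ball {G : ℂ → ℂ} (hG : Differentiable ℂ G) {S : ℝ}
    (h0 : ∀ z ∈ Metric.ball (0 : ℂ) S, G z ≠ 0) :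
    ∃ g : ℂ → ℂ, DifferentiableOn ℂ g (Metric.ball 0 S) ∧ g 0 = 0 ∧
      ∀ z ∈ Metric.ball (0 : ℂ) S, G z = G 0 * Complex.exp (g z) := by
  have hd : DifferentiableOn ℂ (fun z => deriv G z / G z) (Metric.ball 0 S) :=
    (hG.deriv.differentiableOn).div hG.differentiableOn h0
  obtain ⟨g, hg⟩ := hd.isExactOn_ball
  refine ⟨fun z => g z - g 0, fun z hz => ((hg z hz).differentiableAt.sub_const _).differentiableWithinAt,
    by simp, fun z hz => ?_⟩
  have hS : (0 : ℂ) ∈ Metric.ball (0 : ℂ) S := by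
    simp only [Metric.mem_ball, dist_zero_right, norm_zero] at hz ⊢
    exact (norm_nonneg z).trans_lt hz
  have hc : ∀ w ∈ Metric.ball (0 : ℂ) S,
      HasDerivAt (fun z => G z * Complex.exp (-g z)) 0 w := by
    intro w hw
    convert! (hG w).hasDerivAt.mul ((hg w hw).neg.cexp) using 1
    have := h0 w hw
    field_simp
    simp
  have := (convex_ball (0 : ℂ) S).is_const_of_fderivWithin_eq_zero (𝕜 := ℂ)
    (f := fun z => G z * Complex.exp (-g z))
    (fun w hw => (hc w hw).differentiableAt.differentiableWithinAt)
    (fun w hw => by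
      rw [fderivWithin_of_isOpen Metric.isOpen_ball hw]
      ext; simp [(hc w hw).deriv]) hz hS
  change G z = G 0 * Complex.exp (g z - g 0)
  rw [sub_eq_add_neg, add_comm, Complex.exp_add, ← mul_assoc, ← this, mul_assoc, ← Complex.exp_add]
  simp

theorem norm_mul_exp_neg_le_of_ne_zero {G : ℂ → ℂ} (hG : Differentiable ℂ G) {R L : ℝ} (hR : 0 < R)
    (hL : 0 < L) (h0 : ∀ z ∈ Metric.ball (0 : ℂ) (2 * R), G z ≠ 0) (hG0 : 1 ≤ ‖G 0‖)
    (hb : ∀ z ∈ Metric.ball (0 : ℂ) (2 * R), ‖G z‖ ≤ exp L) {z : ℂ} (hz : ‖z‖ ≤ R) :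
    exp (-2 * L) ≤ ‖G z‖ := by
  obtain ⟨g, hg, hg0, hexp⟩ := exists_eq_exp_on_ball hG h0
  have hzm : z ∈ Metric.ball (0 : ℂ) (2 * R) := by simp; linarith
  have h1 := Complex.borelCaratheodory_zero hL hg (fun w hw => by
    have := hb w hw
    rw [hexp w hw, norm_mul, Complex.norm_exp] at this
    rw [Set.mem_ofPred_eq, ← Real.exp_le_exp]
    nlinarith [Real.exp_pos (g w).re]) (by linarith) hzm hg0
  have h2 : ‖g z‖ ≤ 2 * L := by
    refine h1.trans ?_
    rw [div_le_iff₀ (by linarith)]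
    nlinarith
  rw [hexp z hzm, norm_mul, Complex.norm_exp]
  have h3 : exp (-2 * L) ≤ exp (g z).re := by
    rw [Real.exp_le_exp]
    linarith [neg_abs_le (g z).re, Complex.abs_re_le_norm (g z)]
  nlinarith [Real.exp_pos (g z).re]

theorem norm_blaschke_eq {ρ : ℝ} (hρ : 0 < ρ) (a : ℂ) {z : ℂ} (hz : ‖z‖ = ρ) :
    ‖(ρ : ℂ) - starRingEnd ℂ a * z / ρ‖ = ‖z - a‖ := by
  have hz0 : z ≠ 0 := by
    rintro rfl
    simp at hz
    linarith
  have hρ0 : (ρ : ℂ) ≠ 0 := by exact_mod_cast hρ.ne'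
  have e : (ρ : ℂ) - starRingEnd ℂ a * z / ρ = z / ρ * starRingEnd ℂ (z - a) := by
    have : z * starRingEnd ℂ z = (ρ : ℂ) ^ 2 := by
      rw [Complex.mul_conj, Complex.normSq_eq_norm_sq, hz]; push_cast; rfl
    rw [map_sub]
    field_simp
    linear_combination -this
  rw [e, norm_mul, norm_div, hz, Complex.norm_conj, Complex.norm_real, Real.norm_of_nonneg hρ.le,
    div_self hρ.ne', one_mul]

/-- Replacing the linear factors of `F` by their reflections in the circle of radius `ρ` does not
increase the bound on the disc. -/
theorem norm_reflected_le {F g : ℂ → ℂ} (hg : Differentiable ℂ g) {n : ℕ} {a : Fin n → ℂ}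
    (hF : ∀ z, F z = (∏ i, (z - a i)) * g z) {ρ B : ℝ} (hρ : 0 < ρ)
    (hB : ∀ z, ‖z‖ ≤ ρ → ‖F z‖ ≤ B) {z : ℂ} (hz : ‖z‖ ≤ ρ) :
    ‖(∏ i, ((ρ : ℂ) - starRingEnd ℂ (a i) * z / ρ)) * g z‖ ≤ B := by
  have hd : Differentiable ℂ
      fun z => (∏ i, ((ρ : ℂ) - starRingEnd ℂ (a i) * z / ρ)) * g z := by fun_prop
  refine Complex.norm_le_of_forall_mem_frontier_norm_le (U := Metric.ball 0 ρ)
    (f := fun z => (∏ i, ((ρ : ℂ) - starRingEnd ℂ (a i) * z / ρ)) * g z)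
    Metric.isBounded_ball hd.diffContOnCl (fun w hw => ?_) ?_
  · rw [frontier_ball _ hρ.ne', mem_sphere_zero_iff_norm] at hw
    refine le_trans (le_of_eq ?_) (hB w hw.le)
    rw [hF w, norm_mul, norm_mul, norm_prod, norm_prod]
    congr 1
    exact Finset.prod_congr rfl fun i _ => norm_blaschke_eq hρ (a i) hw
  · rw [closure_ball _ hρ.ne']
    simpa using hz

/-- Jensen-type bound for the number of zeros in the disc of radius `S`. -/
theorem exp_card_le_norm_reflected_zero {F g : ℂ → ℂ} {n : ℕ} {a : Fin n → ℂ}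
    (hF : ∀ z, F z = (∏ i, (z - a i)) * g z) (hF0 : ‖F 0‖ = 1) {S : ℝ} (hS : 0 < S)
    (ha : ∀ i, ‖a i‖ ≤ S) :
    exp n ≤ ‖(∏ i, (((exp 1 * S : ℝ) : ℂ) - starRingEnd ℂ (a i) * 0 / (exp 1 * S : ℝ))) * g 0‖ := by
  have h1 : (∏ i, ‖a i‖) * ‖g 0‖ = 1 := by
    rw [← hF0, hF 0, norm_mul, norm_prod]; simp
  have h2 : (∏ i, ‖a i‖) ≤ S ^ n := by
    calc (∏ i, ‖a i‖) ≤ ∏ _i : Fin n, S := by gcongr with i; exact ha i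
      _ = S ^ n := by simp
  have h3 : 1 ≤ S ^ n * ‖g 0‖ := by
    rw [← h1]; gcongr
  rw [norm_mul, norm_prod]
  simp only [mul_zero, zero_div, sub_zero, Complex.norm_real, Finset.prod_const, Finset.card_univ,
    Fintype.card_fin]
  rw [Real.norm_of_nonneg (by positivity), mul_pow, ← Real.exp_nat_mul, mul_one, mul_assoc]
  nlinarith [Real.exp_pos n]

theorem exists_factorization_ne_zero {F : ℂ → ℂ} (hFd : Differentiable ℂ F) (hF0 : ‖F 0‖ = 1)
    {S L : ℝ} (hS : 0 < S) (hB : ∀ z, ‖z‖ ≤ exp 1 * S → ‖F z‖ ≤ exp L) :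
    ∃ (n : ℕ) (a : Fin n → ℂ) (g : ℂ → ℂ), Differentiable ℂ g ∧ (∀ i, ‖a i‖ ≤ S) ∧
      (∀ z, F z = (∏ i, (z - a i)) * g z) ∧ (∀ z, ‖z‖ ≤ S → g z ≠ 0) ∧ (n : ℝ) ≤ L := by
  classical
  let P : ℕ → Prop := fun n => ∃ (a : Fin n → ℂ) (g : ℂ → ℂ), Differentiable ℂ g ∧
    (∀ i, ‖a i‖ ≤ S) ∧ (∀ z, F z = (∏ i, (z - a i)) * g z)
  have hP : ∀ n, P n → (n : ℝ) ≤ L := by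
    rintro n ⟨a, g, hg, ha, hF⟩
    rw [← Real.exp_le_exp]
    exact (exp_card_le_norm_reflected_zero hF hF0 hS ha).trans
      (norm_reflected_le hg hF (by positivity) hB (by simp; positivity))
  have hP0 : P 0 := ⟨Fin.elim0, F, hFd, fun i => i.elim0, by simp⟩
  have hbd : ∀ n, P n → n ≤ ⌊L⌋₊ := fun n hn => Nat.le_floor (hP n hn)
  have hmax := Nat.findGreatest_spec (P := P) (Nat.zero_le ⌊L⌋₊) hP0
  set N := Nat.findGreatest P ⌊L⌋₊ with hN
  have hL := hP N hmax
  obtain ⟨a, g, hg, ha, hF⟩ := hmax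
  refine ⟨N, a, g, hg, ha, hF, fun z hz h0 => ?_, hL⟩
  have hsucc : P (N + 1) := by
    refine ⟨Fin.cons z a, dslope g z, ?_, fun i => ?_, fun w => ?_⟩
    · rw [← differentiableOn_univ] at hg ⊢
      exact (Complex.differentiableOn_dslope Filter.univ_mem).mpr hg
    · refine Fin.cases ?_ (fun i => ?_) i
      · simpa using hz
      · simpa using ha i
    · have := sub_smul_dslope g z w
      rw [h0, sub_zero, smul_eq_mul] at this
      rw [hF w, ← this, Fin.prod_univ_succ]
      simp only [Fin.cons_zero, Fin.cons_succ]
      ring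
  have := Nat.le_findGreatest (hbd _ hsucc) hsucc
  omega

/-- Minimum modulus theorem on circles: a function bounded by `e ^ L` on the disc of radius `2eR`
and normalised at the origin is bounded below on some circle of radius in `((1 - δ)R, R)`. -/
theorem exists_circle_rpow_le_norm {F : ℂ → ℂ} (hFd : Differentiable ℂ F) (hF0 : ‖F 0‖ = 1)
    {R L δ : ℝ} (hR : 0 < R) (hL : 0 < L) (hδ0 : 0 < δ) (hδ1 : δ < 1)
    (hB : ∀ z, ‖z‖ ≤ 2 * exp 1 * R → ‖F z‖ ≤ exp L) :
    ∃ r, (1 - δ) * R < r ∧ r < R ∧ ∀ z : ℂ, ‖z‖ = r → (exp (-7) * δ) ^ L ≤ ‖F z‖ := by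
  have he2 : (2 : ℝ) < exp 1 := lt_trans (by norm_num) Real.exp_one_gt_d9
  set ρ : ℝ := exp 1 * (2 * R) with hρdef
  have hρ : 0 < ρ := by positivity
  have hB' : ∀ z, ‖z‖ ≤ ρ → ‖F z‖ ≤ exp L := fun z hz => hB z (by rw [hρdef] at hz; linarith)
  obtain ⟨n, a, g, hg, ha, hF, hne, hn⟩ :=
    exists_factorization_ne_zero hFd hF0 (S := 2 * R) (by positivity) hB'
  obtain ⟨r, hr, hprod⟩ := exists_pow_le_prod_abs_sub (fun i => ‖a i‖) (R * (1 - δ / 2))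
    (h := δ * R / 4) (by positivity)
  have hδR : 0 < δ * R := by positivity
  have hr1 : (1 - δ) * R < r := by linarith [hr.1]
  have hr2 : r < R := by linarith [hr.2]
  refine ⟨r, hr1, hr2, fun z hz => ?_⟩
  have hlower : ∀ w : ℂ, ‖w‖ ≤ 2 * R → ∀ i, (ρ : ℂ) - starRingEnd ℂ (a i) * w / ρ ≠ 0 := by
    intro w hw i h0
    have h1 : (ρ : ℂ) ^ 2 = starRingEnd ℂ (a i) * w := by
      have : (ρ : ℂ) ≠ 0 := by exact_mod_cast hρ.ne'
      field_simp at h0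
      linear_combination h0
    have h2 := congrArg norm h1
    rw [norm_pow, norm_mul, Complex.norm_conj, Complex.norm_real, Real.norm_of_nonneg hρ.le] at h2
    have h3 : ‖a i‖ * ‖w‖ ≤ (2 * R) * (2 * R) := by gcongr; exact ha i
    have h4 : (2 * R) * 2 < ρ := by rw [hρdef]; nlinarith
    nlinarith
  have hG : exp (-2 * L) ≤ ‖(∏ i, ((ρ : ℂ) - starRingEnd ℂ (a i) * z / ρ)) * g z‖ := by
    refine norm_mul_exp_neg_le_of_ne_zero
      (G := fun z => (∏ i, ((ρ : ℂ) - starRingEnd ℂ (a i) * z / ρ)) * g z) (by fun_prop) hR hL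
      (fun w hw => ?_) ?_ (fun w hw => ?_) (by linarith)
    · have hw' : ‖w‖ ≤ 2 * R := by simpa using (Metric.mem_ball.mp hw).le
      exact mul_ne_zero (Finset.prod_ne_zero_iff.mpr fun i _ => hlower w hw' i) (hne w hw')
    · exact (Real.one_le_exp (by positivity)).trans
        (exp_card_le_norm_reflected_zero hF hF0 (by positivity) ha)
    · have hw' : ‖w‖ ≤ 2 * R := by simpa using (Metric.mem_ball.mp hw).le
      exact norm_reflected_le hg hF hρ hB' (by rw [hρdef]; nlinarith)
  have hup : ∏ i, ‖(ρ : ℂ) - starRingEnd ℂ (a i) * z / ρ‖ ≤ (exp 5 * (R / 8)) ^ n := by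
    calc _ ≤ ∏ _i : Fin n, exp 5 * (R / 8) := by
          gcongr with i
          have h1 : ‖starRingEnd ℂ (a i) * z / ρ‖ ≤ R := by
            rw [norm_div, norm_mul, Complex.norm_conj, Complex.norm_real,
              Real.norm_of_nonneg hρ.le, div_le_iff₀ hρ, hz]
            have : ‖a i‖ * r ≤ 2 * R * R := by
              gcongr
              · rw [← hz]; positivity
              · exact ha i
            rw [hρdef]; nlinarith [mul_pos hR hR]
          have h2 : (8 : ℝ) * (2 * exp 1 + 1) ≤ exp 5 := by
            have : exp 5 = exp 1 ^ 5 := by rw [← Real.exp_nat_mul]; norm_num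
            rw [this]
            have h27 : (2.7 : ℝ) < exp 1 := lt_trans (by norm_num) Real.exp_one_gt_d9
            have h4 : (2.7 : ℝ) ^ 4 ≤ exp 1 ^ 4 := by gcongr
            nlinarith
          calc _ ≤ ‖(ρ : ℂ)‖ + ‖starRingEnd ℂ (a i) * z / ρ‖ := norm_sub_le _ _
            _ ≤ ρ + R := by
              rw [Complex.norm_real, Real.norm_of_nonneg hρ.le]; gcongr
            _ ≤ exp 5 * (R / 8) := by rw [hρdef]; nlinarith
      _ = _ := by simp
  have hlow : (δ * R / 8) ^ n ≤ ∏ i, ‖z - a i‖ := by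
    calc (δ * R / 8) ^ n = (δ * R / 4 / 2) ^ n := by ring
      _ ≤ ∏ i, |r - ‖a i‖| := hprod
      _ ≤ _ := by
        gcongr with i
        rw [← hz]
        exact abs_norm_sub_norm_le z (a i)
  have hcmp : (exp (-5) * δ) ^ n * ∏ i, ‖(ρ : ℂ) - starRingEnd ℂ (a i) * z / ρ‖ ≤
      ∏ i, ‖z - a i‖ := by
    calc _ ≤ (exp (-5) * δ) ^ n * (exp 5 * (R / 8)) ^ n := by gcongr
      _ = (δ * R / 8) ^ n := by
        rw [← mul_pow]
        congr 1
        have : exp (-5) * exp 5 = 1 := by rw [← Real.exp_add]; simp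
        linear_combination (δ * R / 8) * this
      _ ≤ _ := hlow
  have hq0 : 0 < exp (-5) * δ := by positivity
  have hq1 : exp (-5) * δ ≤ 1 := by
    have : exp (-5 : ℝ) ≤ 1 := Real.exp_le_one_iff.mpr (by norm_num)
    nlinarith
  calc (exp (-7) * δ) ^ L = exp (-2 * L) * (exp (-5) * δ) ^ L := by
        rw [show exp (-7 : ℝ) * δ = exp (-2) * (exp (-5) * δ) by
          rw [← mul_assoc, ← Real.exp_add]; norm_num, Real.mul_rpow (by positivity) hq0.le,
          ← Real.exp_mul]
    _ ≤ exp (-2 * L) * (exp (-5) * δ) ^ n := by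
        gcongr
        rw [← Real.rpow_natCast]
        exact Real.rpow_le_rpow_of_exponent_ge hq0 hq1 hn
    _ ≤ ‖(∏ i, ((ρ : ℂ) - starRingEnd ℂ (a i) * z / ρ)) * g z‖ * (exp (-5) * δ) ^ n := by gcongr
    _ = (exp (-5) * δ) ^ n * (∏ i, ‖(ρ : ℂ) - starRingEnd ℂ (a i) * z / ρ‖) * ‖g z‖ := by
        rw [norm_mul, norm_prod]; ring
    _ ≤ (∏ i, ‖z - a i‖) * ‖g z‖ := by gcongr
    _ = ‖F z‖ := by rw [hF z, norm_mul, norm_prod]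

theorem airyCoeff_zero_eq : ∃ p : ℝ, 0 < p ∧ airyCoeff 0 = p := by
  refine ⟨3 ^ (-(2 : ℝ) / 3) / Real.Gamma (2 / 3),
    div_pos (by positivity) (Real.Gamma_pos_of_pos (by norm_num)), ?_⟩
  rw [airyCoeff]
  push_cast [Complex.ofReal_cpow (show (0 : ℝ) ≤ 3 by norm_num), ← Complex.Gamma_ofReal]
  rfl

theorem airyCoeff_one_eq : ∃ p : ℝ, 0 < p ∧ airyCoeff 1 = -p := by
  refine ⟨3 ^ (-(1 : ℝ) / 3) / Real.Gamma (1 / 3),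
    div_pos (by positivity) (Real.Gamma_pos_of_pos (by norm_num)), ?_⟩
  rw [airyCoeff]
  push_cast [Complex.ofReal_cpow (show (0 : ℝ) ≤ 3 by norm_num), ← Complex.Gamma_ofReal]
  rfl

theorem ωc_sub_one : ωc - 1 = -(√3 : ℝ) * Complex.exp (-(π : ℂ) * Complex.I / 6) := by
  have h3 : √3 * √3 = 3 := Real.mul_self_sqrt (by norm_num)
  have hc : Real.cos (2 * π / 3) = -(1 / 2) := by
    rw [show 2 * π / 3 = π - π / 3 by ring, Real.cos_pi_sub, Real.cos_pi_div_three]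
  have hs : Real.sin (2 * π / 3) = √3 / 2 := by
    rw [show 2 * π / 3 = π - π / 3 by ring, Real.sin_pi_sub, Real.sin_pi_div_three]
  rw [ωc, show 2 * (π : ℂ) * Complex.I / 3 = ((2 * π / 3 : ℝ) : ℂ) * Complex.I by push_cast; ring,
    show -(π : ℂ) * Complex.I / 6 = ((-(π / 6) : ℝ) : ℂ) * Complex.I by push_cast; ring,
    Complex.exp_mul_I, Complex.exp_mul_I, ← Complex.ofReal_cos, ← Complex.ofReal_sin,
    ← Complex.ofReal_cos, ← Complex.ofReal_sin, hc, hs, Real.cos_neg, Real.sin_neg,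
    Real.cos_pi_div_six, Real.sin_pi_div_six]
  apply Complex.ext
  · simp
    linarith
  · simp
    ring

/-- The phase of `Wf`, including its constant factor: `Wf f = f ^ (1 / 3) * wPhase`. -/
noncomputable def wPhase : ℂ := Complex.exp (-(π : ℂ) * Complex.I / 6) / (2 * π)

theorem Wf_eq (f : ℝ) : Wf f = ((f ^ ((1 : ℝ) / 3) : ℝ) : ℂ) * wPhase := by
  rw [Wf, wPhase, mul_div_assoc]

theorem norm_wPhase : ‖wPhase‖ = 1 / (2 * π) := by
  rw [wPhase, norm_div,
    show -(π : ℂ) * Complex.I / 6 = ((-(π / 6) : ℝ) : ℂ) * Complex.I by push_cast; ring,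
    Complex.norm_exp_ofReal_mul_I, norm_mul, Complex.norm_real, Real.norm_of_nonneg pi_pos.le]
  simp

theorem wPhase_ne_zero : wPhase ≠ 0 := by
  rw [← norm_pos_iff, norm_wPhase]
  positivity

theorem ωc_sub_one_eq_wPhase : ωc - 1 = -((2 * π * √3 : ℝ) : ℂ) * wPhase := by
  have : (π : ℂ) ≠ 0 := by exact_mod_cast pi_ne_zero
  rw [ωc_sub_one, wPhase]
  push_cast
  field_simp

theorem mul_rpow_neg_two_thirds {f : ℝ} (hf : 0 < f) :
    f * f ^ (-(2 : ℝ) / 3) = f ^ ((1 : ℝ) / 3) := by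
  nth_rewrite 1 [← Real.rpow_one f]
  rw [← Real.rpow_add hf]
  norm_num

theorem Df_zero_eq (κ η : ℝ) {f : ℝ} (hf : 0 < f) {x : ℝ} (hx : x = f ^ ((1 : ℝ) / 3)) :
    (x : ℂ) * Df κ η f 0 = x +
      (Ai (ωc * (κ * x)) * Ai (κ * x) + Ai (ωc * (-(κ * x))) * Ai (-(κ * x))) / (η * wPhase) +
      Ai (ωc * (-(κ * x))) * Ai (κ * x) *
        ((x : ℂ)⁻¹ * (Ai (ωc * (κ * x)) * Ai (-(κ * x)) - Ai (ωc * (-(κ * x))) * Ai (κ * x))) /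
        (η ^ 2 * wPhase ^ 2) := by
  have hx0 : (x : ℂ) ≠ 0 := by
    rw [hx]; exact_mod_cast (Real.rpow_pos_of_pos hf _).ne'
  have hw := wPhase_ne_zero
  have hfx : (f : ℂ) * ((f ^ (-(2 : ℝ) / 3) : ℝ) : ℂ) = x := by
    rw [hx, ← mul_rpow_neg_two_thirds hf]; push_cast; rfl
  have e1 : -ωc * (0 - κ * f) * ((f ^ (-(2 : ℝ) / 3) : ℝ) : ℂ) = ωc * (κ * x) := by
    linear_combination ωc * κ * hfx
  have e2 : -(0 - (κ : ℂ) * f) * ((f ^ (-(2 : ℝ) / 3) : ℝ) : ℂ) = κ * x := by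
    linear_combination κ * hfx
  have e3 : -ωc * (0 + κ * f) * ((f ^ (-(2 : ℝ) / 3) : ℝ) : ℂ) = ωc * (-(κ * x)) := by
    linear_combination -ωc * κ * hfx
  have e4 : -(0 + (κ : ℂ) * f) * ((f ^ (-(2 : ℝ) / 3) : ℝ) : ℂ) = -(κ * x) := by
    linear_combination -κ * hfx
  rw [Df, alphaP, alphaM, betaP, betaM, e1, e2, e3, e4, Wf_eq, ← hx]
  field_simp

theorem hasDerivAt_airy_cross (κ : ℝ) :
    HasDerivAt (fun x : ℝ => Ai (ωc * (κ * x)) * Ai (-(κ * x)) - Ai (ωc * (-(κ * x))) * Ai (κ * x))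
      (2 * κ * (ωc - 1) * (airyCoeff 0 * airyCoeff 1)) 0 := by
  have hl : HasDerivAt (fun x : ℝ => (κ : ℂ) * x) κ 0 := by
    simpa using (Complex.ofRealCLM.hasDerivAt (x := (0 : ℝ))).const_mul (κ : ℂ)
  have h0 : (κ : ℂ) * ((0 : ℝ) : ℂ) = 0 := by simp
  have d1 := (hasDerivAt_Ai_ωc (κ * ((0 : ℝ) : ℂ))).comp (0 : ℝ) hl
  have d2 := (hasDerivAt_Ai (-(κ * ((0 : ℝ) : ℂ)))).comp (0 : ℝ) hl.neg
  have d3 := (hasDerivAt_Ai_ωc (-(κ * ((0 : ℝ) : ℂ)))).comp (0 : ℝ) hl.neg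
  have d4 := (hasDerivAt_Ai (κ * ((0 : ℝ) : ℂ))).comp (0 : ℝ) hl
  convert! (d1.mul d2).sub (d3.mul d4) using 1
  simp [Ai_zero, AiDeriv_zero]
  ring

open Filter Topology in
theorem eventually_one_le_norm_Df_zero {κ η : ℝ} (hκ : 0 < κ) (hη : 0 < η) :
    ∀ᶠ f in 𝓝[>] (0 : ℝ), 1 ≤ ‖Df κ η f 0‖ := by
  obtain ⟨p, hp, hp0⟩ := airyCoeff_zero_eq
  obtain ⟨q, hq, hq1⟩ := airyCoeff_one_eq
  have hx : Tendsto (fun f : ℝ => f ^ ((1 : ℝ) / 3)) (𝓝[>] 0) (𝓝[>] 0) := by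
    refine tendsto_nhdsWithin_iff.mpr ⟨?_, ?_⟩
    · have := (Real.continuous_rpow_const (q := (1 : ℝ) / 3) (by norm_num)).tendsto 0
      rw [Real.zero_rpow (by norm_num)] at this
      exact this.mono_left nhdsWithin_le_nhds
    · filter_upwards [self_mem_nhdsWithin] with f hf using Real.rpow_pos_of_pos hf _
  set Λ : ℂ := ((0 : ℝ) : ℂ) +
      (airyCoeff 0 * airyCoeff 0 + airyCoeff 0 * airyCoeff 0) / (η * wPhase) +
      airyCoeff 0 * airyCoeff 0 * (2 * κ * (ωc - 1) * (airyCoeff 0 * airyCoeff 1)) /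
        (η ^ 2 * wPhase ^ 2) with hΛ
  have hlim : Tendsto (fun x : ℝ => (x : ℂ) +
      (Ai (ωc * (κ * x)) * Ai (κ * x) + Ai (ωc * (-(κ * x))) * Ai (-(κ * x))) / (η * wPhase) +
      Ai (ωc * (-(κ * x))) * Ai (κ * x) *
        ((x : ℂ)⁻¹ * (Ai (ωc * (κ * x)) * Ai (-(κ * x)) - Ai (ωc * (-(κ * x))) * Ai (κ * x))) /
        (η ^ 2 * wPhase ^ 2)) (𝓝[>] 0) (𝓝 Λ) := by
    have hAi : Continuous Ai := differentiable_Ai.continuous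
    have c1 : Tendsto (fun x : ℝ => (x : ℂ) + (Ai (ωc * (κ * x)) * Ai (κ * x) +
        Ai (ωc * (-(κ * x))) * Ai (-(κ * x))) / (η * wPhase)) (𝓝[>] 0)
        (𝓝 (((0 : ℝ) : ℂ) + (airyCoeff 0 * airyCoeff 0 + airyCoeff 0 * airyCoeff 0) /
          (η * wPhase))) := by
      refine Tendsto.mono_left ?_ nhdsWithin_le_nhds
      have hc : Continuous (fun x : ℝ => (x : ℂ) + (Ai (ωc * (κ * x)) * Ai (κ * x) +
        Ai (ωc * (-(κ * x))) * Ai (-(κ * x))) / (η * wPhase)) := by fun_prop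
      simpa [Ai_zero] using hc.tendsto 0
    have c2 : Tendsto (fun x : ℝ => Ai (ωc * (-(κ * x))) * Ai (κ * x)) (𝓝[>] 0)
        (𝓝 (airyCoeff 0 * airyCoeff 0)) := by
      refine Tendsto.mono_left ?_ nhdsWithin_le_nhds
      have hc : Continuous (fun x : ℝ => Ai (ωc * (-(κ * x))) * Ai (κ * x)) := by fun_prop
      simpa [Ai_zero] using hc.tendsto 0
    have c3 := (hasDerivAt_airy_cross κ).tendsto_slope_zero_right
    have c3' : Tendsto (fun x : ℝ => (x : ℂ)⁻¹ *
        (Ai (ωc * (κ * x)) * Ai (-(κ * x)) - Ai (ωc * (-(κ * x))) * Ai (κ * x))) (𝓝[>] 0)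
        (𝓝 (2 * κ * (ωc - 1) * (airyCoeff 0 * airyCoeff 1))) := by
      convert! c3 using 2 with x
      simp
    exact c1.add ((c2.mul c3').div_const _)
  have hΛ0 : Λ ≠ 0 := by
    have e : Λ = ((2 * p ^ 2 / η * (1 + 2 * π * √3 * κ * p * q / η) : ℝ) : ℂ) / wPhase := by
      have hw := wPhase_ne_zero
      have hη' : (η : ℂ) ≠ 0 := by exact_mod_cast hη.ne'
      rw [hΛ, ωc_sub_one_eq_wPhase, hp0, hq1]
      push_cast
      field_simp
      ring
    rw [e]
    exact div_ne_zero (by exact_mod_cast (by positivity :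
      0 < 2 * p ^ 2 / η * (1 + 2 * π * √3 * κ * p * q / η)).ne') wPhase_ne_zero
  have hpos : 0 < ‖Λ‖ / 2 := by positivity
  have h1 := (hlim.norm.eventually (lt_mem_nhds (half_lt_self (norm_pos_iff.mpr hΛ0))))
  have h2 : ∀ᶠ x : ℝ in 𝓝[>] 0, x < ‖Λ‖ / 2 :=
    (eventually_lt_nhds hpos).filter_mono nhdsWithin_le_nhds
  filter_upwards [hx.eventually h1, hx.eventually h2, self_mem_nhdsWithin] with f g1 g2 hf
  rw [← Df_zero_eq κ η hf rfl, norm_mul, Complex.norm_real,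
    Real.norm_of_nonneg (Real.rpow_nonneg (le_of_lt hf) _)] at g1
  have hx0 : 0 < f ^ ((1 : ℝ) / 3) := Real.rpow_pos_of_pos hf _
  by_contra! hlt
  nlinarith

theorem differentiable_Df (κ η f : ℝ) : Differentiable ℂ (Df κ η f) := by
  unfold Df alphaP alphaM betaP betaM
  fun_prop

theorem norm_Df_le {κ η f τ v : ℝ} (hκ : 0 < κ) (hη : 0 < η) (hf0 : 0 < f) (hf1 : f < 1)
    (hτf : (f ^ ((1 : ℝ) / 3))⁻¹ ≤ τ ^ 2) (hv : v = τ + 3 * κ) {z : ℂ}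
    (hz : ‖z‖ * f ^ (-(2 : ℝ) / 3) ≤ τ) :
    ‖Df κ η f z‖ ≤ 1 +
      ((‖airyCoeff 0‖ + ‖airyCoeff 1‖ * v) * exp (2 / 3 * v ^ (3 / 2 : ℝ))) ^ 2 *
        (4 * π * τ ^ 2 / η + ‖(ωc - 1) * (airyCoeff 0 * airyCoeff 1)‖ *
          exp ((1 + v) * (2 * κ)) * (4 * π ^ 2 * τ ^ 4 / η ^ 2)) := by
  set x := f ^ ((1 : ℝ) / 3) with hx
  set s := f ^ (-(2 : ℝ) / 3) with hs
  have hx0 : 0 < x := Real.rpow_pos_of_pos hf0 _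
  have hx1 : x ≤ 1 := Real.rpow_le_one hf0.le hf1.le (by norm_num)
  have hs0 : 0 < s := Real.rpow_pos_of_pos hf0 _
  have hfx : f * s = x := mul_rpow_neg_two_thirds hf0
  have hτ0 : 0 ≤ τ := le_trans (by positivity) hz
  have hκx : κ * x ≤ κ := by nlinarith
  have hv0 : 0 ≤ v := by rw [hv]; positivity
  have hsn : ‖((s : ℝ) : ℂ)‖ = s := by rw [Complex.norm_real, Real.norm_of_nonneg hs0.le]
  have hκf : ‖(κ : ℂ) * f‖ = κ * f := by
    rw [norm_mul, Complex.norm_real, Complex.norm_real, Real.norm_of_nonneg hκ.le,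
      Real.norm_of_nonneg hf0.le]
  set P : ℂ := -(z - κ * f) * s with hP
  set Q : ℂ := -(z + κ * f) * s with hQ
  have hPn : ‖P‖ ≤ τ + κ := by
    rw [hP, norm_mul, norm_neg, hsn]
    calc _ ≤ (‖z‖ + κ * f) * s := by gcongr; rw [← hκf]; exact norm_sub_le _ _
      _ = ‖z‖ * s + κ * x := by rw [← hfx]; ring
      _ ≤ _ := by linarith
  have hQn : ‖Q‖ ≤ τ + κ := by
    rw [hQ, norm_mul, norm_neg, hsn]
    calc _ ≤ (‖z‖ + κ * f) * s := by gcongr; rw [← hκf]; exact norm_add_le _ _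
      _ = ‖z‖ * s + κ * x := by rw [← hfx]; ring
      _ ≤ _ := by linarith
  have hPQ : P = Q + ((2 * κ * x : ℝ) : ℂ) := by
    rw [hP, hQ, ← hfx]; push_cast; ring
  have e1 : -ωc * (z - κ * f) * s = ωc * P := by rw [hP]; ring
  have e2 : -ωc * (z + κ * f) * s = ωc * Q := by rw [hQ]; ring
  set E := (‖airyCoeff 0‖ + ‖airyCoeff 1‖ * v) * exp (2 / 3 * v ^ (3 / 2 : ℝ)) with hE
  have hE0 : 0 ≤ E := by positivity
  have bP : ‖Ai P‖ ≤ E := norm_Ai_le (by linarith)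
  have bQ : ‖Ai Q‖ ≤ E := norm_Ai_le (by linarith)
  have bωP : ‖Ai (ωc * P)‖ ≤ E := norm_Ai_le (by rw [norm_mul, norm_ωc, one_mul]; linarith)
  have bωQ : ‖Ai (ωc * Q)‖ ≤ E := norm_Ai_le (by rw [norm_mul, norm_ωc, one_mul]; linarith)
  set C := ‖(ωc - 1) * (airyCoeff 0 * airyCoeff 1)‖ with hC
  have hcross : ‖Ai (ωc * P) * Ai Q - Ai (ωc * Q) * Ai P‖ ≤ C * exp ((1 + v) * (2 * κ)) := by
    rw [hPQ]
    refine (norm_airy_cross_le Q (T := 2 * κ * x) (m := v) (by positivity) (by linarith)).trans ?_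
    exact mul_le_mul_of_nonneg_left (Real.exp_le_exp.mpr
      (mul_le_mul_of_nonneg_left (by linarith) (by linarith))) (norm_nonneg _)
  have hα : ‖Ai (ωc * P) * Ai P + Ai (ωc * Q) * Ai Q‖ ≤ 2 * E ^ 2 := by
    refine (norm_add_le _ _).trans ?_
    rw [norm_mul, norm_mul]
    have i1 : ‖Ai (ωc * P)‖ * ‖Ai P‖ ≤ E * E := by gcongr
    have i2 : ‖Ai (ωc * Q)‖ * ‖Ai Q‖ ≤ E * E := by gcongr
    linarith
  have hβ : ‖Ai (ωc * Q) * Ai P‖ ≤ E ^ 2 := by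
    rw [norm_mul, sq]; gcongr
  have hWn : ‖Wf f‖⁻¹ ≤ 2 * π * τ ^ 2 := by
    rw [Wf_eq, norm_mul, norm_wPhase, ← hx, Complex.norm_real, Real.norm_of_nonneg hx0.le, mul_inv,
      one_div, inv_inv, mul_comm]
    gcongr
  have hηn : ‖(η : ℂ)‖ = η := by rw [Complex.norm_real, Real.norm_of_nonneg hη.le]
  rw [Df, alphaP, alphaM, betaP, betaM, ← hs, ← hP, ← hQ, e1, e2]
  refine (norm_add_le _ _).trans ?_
  have t1 : ‖1 + (Ai (ωc * P) * Ai P + Ai (ωc * Q) * Ai Q) / (η * Wf f)‖ ≤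
      1 + 2 * E ^ 2 * (2 * π * τ ^ 2) / η := by
    refine (norm_add_le _ _).trans ?_
    rw [norm_one, norm_div, norm_mul, hηn]
    refine add_le_add le_rfl ?_
    calc _ = ‖Ai (ωc * P) * Ai P + Ai (ωc * Q) * Ai Q‖ * ‖Wf f‖⁻¹ / η := by
          rw [div_mul_eq_div_div_swap, div_eq_mul_inv _ ‖Wf f‖]
      _ ≤ _ := by gcongr
  have t2 : ‖Ai (ωc * Q) * Ai P * (Ai (ωc * P) * Ai Q - Ai (ωc * Q) * Ai P) /
      (η ^ 2 * Wf f ^ 2)‖ ≤ E ^ 2 * (C * exp ((1 + v) * (2 * κ))) * (2 * π * τ ^ 2) ^ 2 / η ^ 2 := by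
    rw [norm_div, norm_mul _ (Wf f ^ 2), norm_pow, norm_pow, hηn, norm_mul]
    calc _ = ‖Ai (ωc * Q) * Ai P‖ * ‖Ai (ωc * P) * Ai Q - Ai (ωc * Q) * Ai P‖ *
            ‖Wf f‖⁻¹ ^ 2 / η ^ 2 := by
          rw [div_mul_eq_div_div_swap, div_eq_mul_inv _ (‖Wf f‖ ^ 2), inv_pow]
      _ ≤ _ := by gcongr
  refine (add_le_add t1 t2).trans (le_of_eq ?_)
  ring

open Filter Topology in
theorem eventually_exponent_le {c b d K : ℝ} (hc : 1 < c) :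
    ∀ᶠ τ : ℝ in atTop, 4 / 3 * (τ + b) ^ (3 / 2 : ℝ) + d * (τ + b) + K ≤
      c * (4 / 3 * τ ^ (3 / 2 : ℝ)) := by
  have h1 : Tendsto (fun τ : ℝ => (τ + b) / τ) atTop (𝓝 1) := by
    have : Tendsto (fun τ : ℝ => 1 + b / τ) atTop (𝓝 (1 + 0)) :=
      tendsto_const_nhds.add (tendsto_const_nhds.div_atTop tendsto_id)
    rw [add_zero] at this
    refine this.congr' ?_
    filter_upwards [eventually_gt_atTop 0] with τ hτ
    field_simp
  have h2 : Tendsto (fun τ : ℝ => ((τ + b) / τ) ^ (3 / 2 : ℝ)) atTop (𝓝 1) := by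
    have := h1.rpow_const (p := 3 / 2) (Or.inr (by norm_num))
    rwa [Real.one_rpow] at this
  have h3 : Tendsto (fun τ : ℝ => τ ^ (-(1 / 2) : ℝ)) atTop (𝓝 0) :=
    tendsto_rpow_neg_atTop (by norm_num)
  have h4 : Tendsto (fun τ : ℝ => τ ^ (-(3 / 2) : ℝ)) atTop (𝓝 0) :=
    tendsto_rpow_neg_atTop (by norm_num)
  have h5 : Tendsto (fun τ : ℝ => 4 / 3 * ((τ + b) / τ) ^ (3 / 2 : ℝ) +
      d * ((τ + b) / τ * τ ^ (-(1 / 2) : ℝ)) + K * τ ^ (-(3 / 2) : ℝ)) atTop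
      (𝓝 (4 / 3 * 1 + d * (1 * 0) + K * 0)) :=
    ((h2.const_mul _).add ((h1.mul h3).const_mul d)).add (h4.const_mul K)
  have h6 := h5.eventually (gt_mem_nhds (show 4 / 3 * 1 + d * (1 * 0) + K * 0 < c * (4 / 3) by
    linarith))
  filter_upwards [h6, eventually_gt_atTop 0, eventually_ge_atTop (-b)] with τ hτ hτ0 hτb
  have hp : 0 < τ ^ (3 / 2 : ℝ) := by positivity
  have e1 : ((τ + b) / τ) ^ (3 / 2 : ℝ) * τ ^ (3 / 2 : ℝ) = (τ + b) ^ (3 / 2 : ℝ) := by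
    rw [← Real.mul_rpow (div_nonneg (by linarith) hτ0.le) hτ0.le, div_mul_cancel₀ _ hτ0.ne']
  have e2 : (τ + b) / τ * τ ^ (-(1 / 2) : ℝ) * τ ^ (3 / 2 : ℝ) = τ + b := by
    rw [mul_assoc, ← Real.rpow_add hτ0]
    norm_num
    field_simp
  have e3 : τ ^ (-(3 / 2) : ℝ) * τ ^ (3 / 2 : ℝ) = 1 := by
    rw [← Real.rpow_add hτ0]
    norm_num
  have := mul_le_mul_of_nonneg_right hτ.le hp.le
  linear_combination this - 4 / 3 * e1 - d * e2 - K * e3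

open Filter Topology in
/-- The bound of `norm_Df_le` is eventually below `exp (4cτ^{3/2}/3)` for `c > 1`. -/
theorem eventually_growth_le {A B C κ η c : ℝ} (hA : 0 ≤ A) (hB : 0 ≤ B) (hC : 0 ≤ C) (hκ : 0 < κ)
    (hη : 0 < η) (hc : 1 < c) :
    ∀ᶠ τ : ℝ in atTop, 1 + ((A + B * (τ + 3 * κ)) * exp (2 / 3 * (τ + 3 * κ) ^ (3 / 2 : ℝ))) ^ 2 *
        (4 * π * τ ^ 2 / η + C * exp ((1 + (τ + 3 * κ)) * (2 * κ)) * (4 * π ^ 2 * τ ^ 4 / η ^ 2)) ≤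
      exp (c * (4 / 3 * τ ^ (3 / 2 : ℝ))) := by
  set K : ℝ := 1 + (A + B) ^ 2 * (4 * π / η + C * (4 * π ^ 2 / η ^ 2)) with hK
  have hK0 : 0 < K := by positivity
  filter_upwards [eventually_exponent_le (b := 3 * κ + 1) (d := 2 * κ + 1) (K := log (K * 720)) hc,
    eventually_gt_atTop 0] with τ hτ hτ0
  set u : ℝ := τ + (3 * κ + 1) with hu
  have hu1 : 1 ≤ u := by rw [hu]; linarith
  have hu0 : 0 < u := by linarith
  have hτu : τ ≤ u := by rw [hu]; linarith
  have hX : 1 ≤ exp (4 / 3 * u ^ (3 / 2 : ℝ)) := Real.one_le_exp (by positivity)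
  have hY : 1 ≤ exp (2 * κ * u) := Real.one_le_exp (by positivity)
  set X := exp (4 / 3 * u ^ (3 / 2 : ℝ)) with hXdef
  set Y := exp (2 * κ * u) with hYdef
  have i1 : ((A + B * (τ + 3 * κ)) * exp (2 / 3 * (τ + 3 * κ) ^ (3 / 2 : ℝ))) ^ 2 ≤
      ((A + B) * u) ^ 2 * X := by
    rw [mul_pow, ← Real.exp_nat_mul]
    have hτκ : τ + 3 * κ ≤ u := by rw [hu]; linarith
    have hlin : A + B * (τ + 3 * κ) ≤ (A + B) * u := by
      have j1 : A ≤ A * u := le_mul_of_one_le_right hA hu1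
      have j2 := mul_le_mul_of_nonneg_left hτκ hB
      linarith
    have hpow : (τ + 3 * κ) ^ (3 / 2 : ℝ) ≤ u ^ (3 / 2 : ℝ) :=
      Real.rpow_le_rpow (by positivity) hτκ (by norm_num)
    refine mul_le_mul (pow_le_pow_left₀ (by positivity) hlin 2) ?_ (exp_pos _).le (by positivity)
    rw [hXdef]
    refine Real.exp_le_exp.mpr ?_
    push_cast
    linarith
  have i2 : 4 * π * τ ^ 2 / η ≤ 4 * π / η * (u ^ 4 * Y) := by
    have : τ ^ 2 ≤ u ^ 4 * Y := by
      calc τ ^ 2 ≤ u ^ 2 := by gcongr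
        _ ≤ u ^ 4 := pow_le_pow_right₀ hu1 (by norm_num)
        _ ≤ u ^ 4 * Y := le_mul_of_one_le_right (by positivity) hY
    calc _ = 4 * π / η * τ ^ 2 := by ring
      _ ≤ _ := by gcongr
  have i3 : C * exp ((1 + (τ + 3 * κ)) * (2 * κ)) * (4 * π ^ 2 * τ ^ 4 / η ^ 2) ≤
      C * (4 * π ^ 2 / η ^ 2) * (u ^ 4 * Y) := by
    have e : exp ((1 + (τ + 3 * κ)) * (2 * κ)) = Y := by
      rw [hYdef, hu]; congr 1; ring
    rw [e]
    calc _ = C * (4 * π ^ 2 / η ^ 2) * (τ ^ 4 * Y) := by ring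
      _ ≤ _ := by gcongr
  have i4 : 1 ≤ u ^ 6 * X * Y := by
    have : 1 ≤ u ^ 6 := one_le_pow₀ hu1
    have h2 : 1 ≤ u ^ 6 * X := one_le_mul_of_one_le_of_one_le this hX
    exact one_le_mul_of_one_le_of_one_le h2 hY
  have i5 : u ^ 6 ≤ 720 * exp u := by
    have := Real.pow_div_factorial_le_exp u hu0.le 6
    rw [div_le_iff₀ (by positivity)] at this
    simpa [Nat.factorial, mul_comm] using this
  calc _ ≤ u ^ 6 * X * Y + ((A + B) * u) ^ 2 * X *
          (4 * π / η * (u ^ 4 * Y) + C * (4 * π ^ 2 / η ^ 2) * (u ^ 4 * Y)) := by gcongr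
    _ = K * u ^ 6 * X * Y := by rw [hK]; ring
    _ ≤ K * (720 * exp u) * X * Y := by gcongr
    _ = exp (4 / 3 * u ^ (3 / 2 : ℝ) + (2 * κ + 1) * u + log (K * 720)) := by
        have hexp : exp ((2 * κ + 1) * u) = Y * exp u := by
          rw [add_mul, one_mul, Real.exp_add]
        rw [Real.exp_add _ (log _), Real.exp_log (by positivity), Real.exp_add _ ((2 * κ + 1) * u),
          hexp]
        ring
    _ ≤ _ := Real.exp_le_exp.mpr hτ

/-- Cartan-type lower bound for the normalized determinant `B_f = D_f/D_f(0)`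
on a circle of radius `r` close to any given `R > f^a`. -/
theorem stmt13 (κ η a c δ : ℝ) (hκ : 0 < κ) (hη : 0 < η)
    (ha0 : 0 < a) (ha1 : a < 1 / 2) (hc : 1 < c) (hδ0 : 0 < δ) (hδ1 : δ < 1) :
    ∃ f₀ > (0 : ℝ), ∀ f : ℝ, 0 < f → f < f₀ →
      Df κ η f 0 ≠ 0 ∧
      ∀ R : ℝ, f ^ a < R → ∃ r : ℝ, (1 - δ) * R < r ∧ r < R ∧
        ∀ z : ℂ, ‖z‖ = r →
          (Real.exp (-7) * δ) ^ (c * 4 * (2 * Real.exp 1 * R) ^ ((3 : ℝ) / 2) / (3 * f)) ≤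
            ‖Df κ η f z / Df κ η f 0‖ := by
  obtain ⟨τ₀, hτ₀⟩ := Filter.eventually_atTop.mp
    (eventually_growth_le (norm_nonneg (airyCoeff 0)) (norm_nonneg (airyCoeff 1))
      (norm_nonneg ((ωc - 1) * (airyCoeff 0 * airyCoeff 1))) hκ hη hc)
  have hlarge : ∀ᶠ f : ℝ in nhdsWithin 0 (Set.Ioi 0), τ₀ ≤ f ^ (-(1 / 6) : ℝ) :=
    (tendsto_rpow_neg_nhdsGT_zero (by norm_num)).eventually_ge_atTop τ₀
  have hlt : ∀ᶠ f : ℝ in nhdsWithin 0 (Set.Ioi 0), f < 1 :=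
    (eventually_lt_nhds one_pos).filter_mono nhdsWithin_le_nhds
  obtain ⟨f₀, hf₀, hev⟩ := mem_nhdsGT_iff_exists_Ioo_subset.mp
    ((eventually_one_le_norm_Df_zero hκ hη).and (hlarge.and hlt))
  refine ⟨f₀, hf₀, fun f hf hff => ?_⟩
  obtain ⟨hD, hfl, hf1⟩ := hev ⟨hf, hff⟩
  have hD0 : Df κ η f 0 ≠ 0 := by
    rw [← norm_pos_iff]; linarith
  refine ⟨hD0, fun R hR => ?_⟩
  have hR0 : 0 < R := (Real.rpow_pos_of_pos hf a).trans hR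
  set ρ : ℝ := 2 * exp 1 * R with hρ
  have hρ0 : 0 < ρ := by positivity
  have hRρ : R ≤ ρ := by
    have : 1 ≤ exp 1 := Real.one_le_exp (by norm_num)
    rw [hρ]; nlinarith
  set τ : ℝ := ρ * f ^ (-(2 : ℝ) / 3) with hτ
  have hs0 : 0 < f ^ (-(2 : ℝ) / 3) := Real.rpow_pos_of_pos hf _
  have hτ0 : 0 < τ := by positivity
  have hτf : f ^ (-(1 / 6) : ℝ) ≤ τ := by
    calc f ^ (-(1 / 6) : ℝ) ≤ f ^ (a + -(2 : ℝ) / 3) :=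
          Real.rpow_le_rpow_of_exponent_ge hf hf1.le (by linarith)
      _ = f ^ a * f ^ (-(2 : ℝ) / 3) := Real.rpow_add hf _ _
      _ ≤ τ := by rw [hτ]; gcongr; linarith
  have hτsq : (f ^ ((1 : ℝ) / 3))⁻¹ ≤ τ ^ 2 := by
    calc (f ^ ((1 : ℝ) / 3))⁻¹ = (f ^ (-(1 / 6) : ℝ)) ^ 2 := by
          rw [← Real.rpow_neg hf.le, ← Real.rpow_mul_natCast hf.le]; norm_num
      _ ≤ τ ^ 2 := by gcongr
  have hexp : c * 4 * ρ ^ ((3 : ℝ) / 2) / (3 * f) = c * (4 / 3 * τ ^ (3 / 2 : ℝ)) := by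
    rw [hτ, Real.mul_rpow hρ0.le hs0.le, ← Real.rpow_mul hf.le,
      show -(2 : ℝ) / 3 * (3 / 2) = -1 by norm_num, Real.rpow_neg_one]
    field_simp
  rw [hexp]
  refine exists_circle_rpow_le_norm (F := fun z => Df κ η f z / Df κ η f 0)
    ((differentiable_Df κ η f).div_const _) (by simp [hD0]) hR0 (by positivity) hδ0 hδ1
    fun z hz => ?_
  rw [norm_div]
  refine (div_le_self (norm_nonneg _) hD).trans ((norm_Df_le hκ hη hf hf1 hτsq rfl ?_).trans
    (hτ₀ τ (hfl.trans hτf)))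
  rw [hτ]
  gcongr
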